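/- arXiv:1907.11492 — 2 statements merged into one kernel-verified Lean document; each statement's English description precedes it below -/
import Mathlib

section
/- Suppose M ∈ SL(2,ℝ), κ > 0, s ∈ {+1, −1} and E_c ∈ ℝ are such that M·T(E_c)·M⁻¹ = s·D_κ where D_κ = diag(κ, 1/κ), and suppose a, b, c ∈ ℝ satisfy M·T′(E_c)·M⁻¹ = s·(a·((0,−1),(1,0)) + b·((0,1),(1,0)) + c·((1,0),(0,−1)))·D_κ. Then a ≥ 0 and a² ≥ b² + c². -/
open Matrix

/-- The single-site transfer matrix `T̂_{v̂,t̂} = (1/t̂)·((v̂, −t̂²),(1, 0))`. -/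
noncomputable def siteTransfer (v t : ℝ) : Matrix (Fin 2) (Fin 2) ℝ :=
  (1 / t) • !![v, -t ^ 2; 1, 0]

/-- The partial products `P_k = T̂_{v(k−1)−E,t(k−1)} ⋯ T̂_{v(0)−E,t(0)}`, with `P_0 = I`;
the full transfer matrix is `T(E) = P_L`. -/
noncomputable def partialTransfer (t v : ℕ → ℝ) (E : ℝ) : ℕ → Matrix (Fin 2) (Fin 2) ℝ
  | 0 => 1
  | k + 1 => siteTransfer (v k - E) (t k) * partialTransfer t v E k

/-!
Let `J = ((0, 1), (-1, 0))`, so that `Aᵀ J A = det A • J`. For a curve `A(E)` in `SL(2, ℝ)` the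
Wronskian form `Aᵀ J A'` is positive semidefinite when all vectors `A(E) w` turn counterclockwise
as `E` grows. By the Leibniz rule this property passes to products, and for a single site the form
is `diag(1 / t², 0)`, so it holds for `T(E)`. Left multiplication by `M` scales the form by `det M`.
If `A' = X A`, then `Aᵀ J A' = Aᵀ (J X) A`, so `J X` is positive semidefinite. For `X` with
coefficients `a, b, c` this matrix is `((a + b, -c), (-c, a - b))`, with trace `2 a` and
determinant `a² - b² - c²`.
-/

section WronskianForm

/-- The Gram matrix `J` of the standard area form on the plane, with the orientation for which the
transfer matrices have positive Wronskian form. -/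
def planeJ (R : Type*) [CommRing R] : Matrix (Fin 2) (Fin 2) R :=
  !![0, 1; -1, 0]

variable {R : Type*} [CommRing R]

/-- The matrix of the Wronskian form `w ↦ ⟨A w, J A' w⟩` of a curve of matrices with value `A` and
derivative `A'` at a given point; its sign tells in which direction the vectors `A w` rotate. -/
def wronskianForm (A A' : Matrix (Fin 2) (Fin 2) R) : Matrix (Fin 2) (Fin 2) R :=
  Aᵀ * planeJ R * A'

lemma transpose_mul_planeJ_mul_self (A : Matrix (Fin 2) (Fin 2) R) :
    Aᵀ * planeJ R * A = A.det • planeJ R := by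
  ext i j
  fin_cases i <;> fin_cases j <;>
    simp [planeJ, det_fin_two, mul_apply, Fin.sum_univ_two] <;> ring

lemma wronskianForm_mul_left (M A A' : Matrix (Fin 2) (Fin 2) R) :
    wronskianForm (M * A) (M * A') = M.det • wronskianForm A A' := by
  calc wronskianForm (M * A) (M * A')
      = Aᵀ * (Mᵀ * planeJ R * M) * A' := by
        simp only [wronskianForm, transpose_mul, Matrix.mul_assoc]
    _ = M.det • wronskianForm A A' := by
        rw [transpose_mul_planeJ_mul_self, Matrix.mul_smul, Matrix.smul_mul, wronskianForm]

lemma wronskianForm_leibniz (A A' B B' : Matrix (Fin 2) (Fin 2) R) :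
    wronskianForm (A * B) (A' * B + A * B') =
      Bᵀ * wronskianForm A A' * B + A.det • wronskianForm B B' := by
  rw [← wronskianForm_mul_left]
  simp only [wronskianForm, transpose_mul, Matrix.mul_add, Matrix.mul_assoc]

lemma posSemidef_wronskianForm_leibniz {A A' B B' : Matrix (Fin 2) (Fin 2) ℝ}
    (hdet : 0 ≤ A.det) (hA : (wronskianForm A A').PosSemidef)
    (hB : (wronskianForm B B').PosSemidef) :
    (wronskianForm (A * B) (A' * B + A * B')).PosSemidef := by
  rw [wronskianForm_leibniz, ← conjTranspose_eq_transpose_of_trivial]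
  exact (hA.conjTranspose_mul_mul_same B).add (hB.smul hdet)

lemma posSemidef_planeJ_mul_of_conj_eq {M A A' X : Matrix (Fin 2) (Fin 2) ℝ}
    (hM : 0 < M.det) (hA : A.det ≠ 0) (hpos : (wronskianForm A A').PosSemidef)
    (hX : M * A' * M⁻¹ = X * (M * A * M⁻¹)) :
    (planeJ ℝ * X).PosSemidef := by
  have hMunit : IsUnit M.det := hM.ne'.isUnit
  have hMA : IsUnit (M * A) :=
    (isUnit_iff_isUnit_det _).2 (by rw [det_mul]; exact hMunit.mul hA.isUnit)
  have hX' : M * A' = X * (M * A) := by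
    rw [← Matrix.mul_assoc] at hX
    exact (isUnit_nonsing_inv_iff.2 ((isUnit_iff_isUnit_det M).2 hMunit)).mul_left_injective hX
  have hform : M.det • wronskianForm A A' = star (M * A) * (planeJ ℝ * X) * (M * A) := by
    rw [← wronskianForm_mul_left, hX', star_eq_conjTranspose,
      conjTranspose_eq_transpose_of_trivial]
    simp only [wronskianForm, Matrix.mul_assoc]
  exact hMA.posSemidef_star_left_conjugate_iff.1 (hform ▸ hpos.smul hM.le)

lemma nonneg_and_sq_add_sq_le_of_posSemidef_planeJ_mul {a b c : ℝ}
    (h : (planeJ ℝ * (a • !![0, -1; 1, 0] + b • !![0, 1; 1, 0] + c • !![1, 0; 0, -1])).PosSemidef) :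
    0 ≤ a ∧ b ^ 2 + c ^ 2 ≤ a ^ 2 := by
  have hmatrix : planeJ ℝ * (a • !![0, -1; 1, 0] + b • !![0, 1; 1, 0] + c • !![1, 0; 0, -1]) =
      !![a + b, -c; -c, a - b] := by
    ext i j
    fin_cases i <;> fin_cases j <;> simp [planeJ, sub_eq_neg_add]
  rw [hmatrix] at h
  have htrace : 0 ≤ a + b + (a - b) := by simpa only [trace_fin_two_of] using h.trace_nonneg
  have hdet : 0 ≤ (a + b) * (a - b) - -c * -c := by simpa only [det_fin_two_of] using h.det_nonneg
  constructor <;> linarith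

end WronskianForm

lemma hasDerivAt_matrix_mul_apply {𝕜 𝔸 l m n : Type*} [NontriviallyNormedField 𝕜]
    [NormedRing 𝔸] [NormedAlgebra 𝕜 𝔸] [Fintype m] {A : 𝕜 → Matrix l m 𝔸} {B : 𝕜 → Matrix m n 𝔸}
    {A' : Matrix l m 𝔸} {B' : Matrix m n 𝔸} {x : 𝕜} {i : l} {j : n}
    (hA : ∀ k, HasDerivAt (fun y => A y i k) (A' i k) x)
    (hB : ∀ k, HasDerivAt (fun y => B y k j) (B' k j) x) :
    HasDerivAt (fun y => (A y * B y) i j) ((A' * B x + A x * B') i j) x := by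
  simp only [Matrix.add_apply, mul_apply, ← Finset.sum_add_distrib]
  exact HasDerivAt.fun_sum fun k _ => (hA k).mul (hB k)

/-- The `E`-derivative of `siteTransfer (v - E) t`, which depends on neither `v` nor `E`. -/
noncomputable def siteTransferDeriv (t : ℝ) : Matrix (Fin 2) (Fin 2) ℝ :=
  !![-1 / t, 0; 0, 0]

lemma hasDerivAt_siteTransfer (v t E : ℝ) (i j : Fin 2) :
    HasDerivAt (fun E => siteTransfer (v - E) t i j) (siteTransferDeriv t i j) E := by
  have hcorner : HasDerivAt (fun E => t⁻¹ * (v - E)) (-1 / t) E := by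
    simpa [div_eq_inv_mul] using ((hasDerivAt_id E).const_sub v).const_mul t⁻¹
  fin_cases i <;> fin_cases j <;>
    simp [siteTransfer, siteTransferDeriv, hcorner, hasDerivAt_const]

lemma det_siteTransfer (v : ℝ) {t : ℝ} (ht : t ≠ 0) : (siteTransfer v t).det = 1 := by
  simp [siteTransfer, det_fin_two, pow_two, ht]

lemma wronskianForm_siteTransfer (v t : ℝ) :
    wronskianForm (siteTransfer v t) (siteTransferDeriv t) = diagonal ![(t ^ 2)⁻¹, 0] := by
  ext i j
  fin_cases i <;> fin_cases j <;>
    simp [wronskianForm, planeJ, siteTransfer, siteTransferDeriv, mul_apply, Fin.sum_univ_two,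
      div_eq_mul_inv, pow_two]

lemma posSemidef_wronskianForm_siteTransfer (v t : ℝ) :
    (wronskianForm (siteTransfer v t) (siteTransferDeriv t)).PosSemidef := by
  rw [wronskianForm_siteTransfer, posSemidef_diagonal_iff, Fin.forall_fin_two]
  exact ⟨inv_nonneg.2 (sq_nonneg t), le_rfl⟩

/-- The `E`-derivative of `partialTransfer t v E L`, computed recursively by the Leibniz rule. -/
noncomputable def partialTransferDeriv (t v : ℕ → ℝ) (E : ℝ) : ℕ → Matrix (Fin 2) (Fin 2) ℝ
  | 0 => 0
  | k + 1 => siteTransferDeriv (t k) * partialTransfer t v E k +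
      siteTransfer (v k - E) (t k) * partialTransferDeriv t v E k

lemma hasDerivAt_partialTransfer (t v : ℕ → ℝ) (E : ℝ) (L : ℕ) (i j : Fin 2) :
    HasDerivAt (fun E => partialTransfer t v E L i j) (partialTransferDeriv t v E L i j) E := by
  induction L generalizing i j with
  | zero => exact hasDerivAt_const E _
  | succ k ih =>
    exact hasDerivAt_matrix_mul_apply (hasDerivAt_siteTransfer (v k) (t k) E i) fun l => ih l j

lemma det_partialTransfer {L : ℕ} {t : ℕ → ℝ} (v : ℕ → ℝ) (ht : ∀ k < L, t k ≠ 0) (E : ℝ) :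
    (partialTransfer t v E L).det = 1 := by
  induction L with
  | zero => exact det_one
  | succ k ih =>
    rw [partialTransfer, det_mul, det_siteTransfer _ (ht k k.lt_succ_self),
      ih fun j hj => ht j (hj.trans k.lt_succ_self), one_mul]

lemma posSemidef_wronskianForm_partialTransfer {L : ℕ} {t : ℕ → ℝ} (v : ℕ → ℝ)
    (ht : ∀ k < L, t k ≠ 0) (E : ℝ) :
    (wronskianForm (partialTransfer t v E L) (partialTransferDeriv t v E L)).PosSemidef := by
  induction L with
  | zero => simpa only [wronskianForm, partialTransferDeriv, Matrix.mul_zero] using PosSemidef.zero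
  | succ k ih =>
    have hdet : 0 ≤ (siteTransfer (v k - E) (t k)).det :=
      det_siteTransfer (v k - E) (ht k k.lt_succ_self) ▸ zero_le_one
    exact posSemidef_wronskianForm_leibniz hdet (posSemidef_wronskianForm_siteTransfer _ _)
      (ih fun j hj => ht j (hj.trans k.lt_succ_self))

theorem critical_energy_expansion_coefficients_general
    {L : ℕ} {t v : ℕ → ℝ} (ht : ∀ k < L, t k ≠ 0)
    {M : Matrix (Fin 2) (Fin 2) ℝ} (hM : 0 < M.det) {E : ℝ}
    {T' : Matrix (Fin 2) (Fin 2) ℝ}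
    (hT' : ∀ i j : Fin 2,
      HasDerivAt (fun E : ℝ => partialTransfer t v E L i j) (T' i j) E)
    {a b c : ℝ}
    (hX : M * T' * M⁻¹ =
      (a • !![0, -1; 1, 0] + b • !![0, 1; 1, 0] + c • !![1, 0; 0, -1]) *
        (M * partialTransfer t v E L * M⁻¹)) :
    0 ≤ a ∧ b ^ 2 + c ^ 2 ≤ a ^ 2 := by
  obtain rfl : T' = partialTransferDeriv t v E L :=
    Matrix.ext fun i j => (hT' i j).unique (hasDerivAt_partialTransfer t v E L i j)
  have hdet : (partialTransfer t v E L).det ≠ 0 := by simp [det_partialTransfer v ht E]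
  exact nonneg_and_sq_add_sq_le_of_posSemidef_planeJ_mul <|
    posSemidef_planeJ_mul_of_conj_eq hM hdet (posSemidef_wronskianForm_partialTransfer v ht E) hX

/-- If `M ∈ SL(2,ℝ)` diagonalizes the transfer matrix at a critical energy,
`M·T(E_c)·M⁻¹ = s·D_κ` with `s = ±1`, `D_κ = diag(κ, 1/κ)`, and the derivative satisfies
`M·T′(E_c)·M⁻¹ = s·(a·((0,−1),(1,0)) + b·((0,1),(1,0)) + c·((1,0),(0,−1)))·D_κ`, then
`a ≥ 0` and `a² ≥ b² + c²`. -/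
theorem critical_energy_expansion_coefficients
    (L : ℕ) (t v : ℕ → ℝ) (ht : ∀ k < L, 0 < t k)
    (M : Matrix (Fin 2) (Fin 2) ℝ) (hM : M.det = 1)
    (κ : ℝ) (hκ : 0 < κ) (s : ℝ) (hs : s = 1 ∨ s = -1) (Ec : ℝ)
    (T' : Matrix (Fin 2) (Fin 2) ℝ)
    (hT' : ∀ i j : Fin 2,
      HasDerivAt (fun E : ℝ => partialTransfer t v E L i j) (T' i j) Ec)
    (a b c : ℝ)
    (h0 : M * partialTransfer t v Ec L * M⁻¹ = s • Matrix.diagonal ![κ, κ⁻¹])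
    (h1 : M * T' * M⁻¹ =
      s • ((a • (!![0, -1; 1, 0] : Matrix (Fin 2) (Fin 2) ℝ) +
            b • (!![0, 1; 1, 0] : Matrix (Fin 2) (Fin 2) ℝ) +
            c • (!![1, 0; 0, -1] : Matrix (Fin 2) (Fin 2) ℝ)) *
          Matrix.diagonal ![κ, κ⁻¹])) :
    0 ≤ a ∧ b ^ 2 + c ^ 2 ≤ a ^ 2 := by
  exact critical_energy_expansion_coefficients_general (fun k hk => (ht k hk).ne')
    (hM ▸ zero_lt_one) hT' (by rw [h0, h1, Matrix.mul_smul])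
end

section
/- There exists ε₀ ∈ (0,1), depending only on k, C1, C2, C3, such that for all ε ∈ (0, ε₀], all parameters a, b, α, β, γ, δ satisfying the stated bounds, and all x with 0 < x < Kε, one has 0 < Q_ε·x < 2Kε. Consequently, if κ > 0 satisfies κ ≤ C4, then κ²·(Q_ε·x) < 2C4²Kε; in particular, if κ²·(Q_ε·x) ≥ Kε, then κ²·(Q_ε·x) lies in [Kε, 2C4²Kε). -/
/-- The Möbius map `Q_ε·x` of the perturbative Prüfer phase dynamics. -/
noncomputable def Qmob (ε a b α β γ δ x : ℝ) : ℝ :=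
  ((1 + ε ^ 2 * α) * x + (a - b - ε * β) * ε) /
    (1 + ε ^ 2 * δ - (a + b + ε * γ) * ε * x)

/-!
Where `0 ≤ x ≤ Kε`, the numerator of `Q_ε·x` is `x + (a - b)ε + O(ε²)` and its denominator is at
least `1 - O(ε²)`, with errors controlled by `C2`, `C3` and `K` alone. Hence
`C1 - o(1) ≤ Q_ε·x / ε ≤ K + C2 + o(1)` uniformly, and `K = 2C2(1-k⁻¹)⁻¹ > C2` gives
`K + C2 < 2K`.
-/

open Filter Set Topology

namespace Qmob

variable {ε a b α β γ δ x C1 C2 C3 K L : ℝ}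

/-- The numerator of the Möbius map `Q_ε·x`. -/
def num (ε a b α β x : ℝ) : ℝ :=
  (1 + ε ^ 2 * α) * x + (a - b - ε * β) * ε

/-- The denominator of the Möbius map `Q_ε·x`. -/
def den (ε a b γ δ x : ℝ) : ℝ :=
  1 + ε ^ 2 * δ - (a + b + ε * γ) * ε * x

/-- A bound, relative to `ε`, for the error in replacing the numerator of `Q_ε·x` by its
first-order part `x + (a - b)ε` on `0 ≤ x ≤ Kε`. -/
def numError (C3 K ε : ℝ) : ℝ :=
  ε * (C3 * (K * ε + 1))

/-- A bound for the amount by which the denominator of `Q_ε·x` can fall below `1` on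
`0 ≤ x ≤ Kε`. -/
def denError (C2 C3 K ε : ℝ) : ℝ :=
  ε ^ 2 * (C3 + (C2 + ε * C3) * K)

theorem eq_num_div_den : Qmob ε a b α β γ δ x = num ε a b α β x / den ε a b γ δ x :=
  rfl

theorem num_sub_eq : num ε a b α β x - (x + (a - b) * ε) = ε ^ 2 * (α * x - β) := by
  rw [num]
  ring

theorem abs_num_sub_le (hα : |α| ≤ C3) (hβ : |β| ≤ C3) (hx : 0 ≤ x) (hxK : x ≤ K * ε) :
    |num ε a b α β x - (x + (a - b) * ε)| ≤ numError C3 K ε * ε := by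
  have hC3 : 0 ≤ C3 := (abs_nonneg α).trans hα
  calc |num ε a b α β x - (x + (a - b) * ε)| = ε ^ 2 * |α * x - β| := by
        rw [num_sub_eq, abs_mul, abs_sq]
    _ ≤ ε ^ 2 * (|α| * x + |β|) := by
        gcongr
        simpa only [abs_mul, abs_of_nonneg hx] using abs_sub (α * x) β
    _ ≤ ε ^ 2 * (C3 * (K * ε) + C3) := by gcongr
    _ = numError C3 K ε * ε := by rw [numError]; ring

theorem one_sub_denError_le_den (hε : 0 ≤ ε) (hC2 : 0 ≤ C2) (hab : a + b ≤ C2)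
    (hγ : |γ| ≤ C3) (hδ : |δ| ≤ C3) (hx : 0 ≤ x) (hxK : x ≤ K * ε) :
    1 - denError C2 C3 K ε ≤ den ε a b γ δ x := by
  have hC3 : 0 ≤ C3 := (abs_nonneg γ).trans hγ
  have hlinear : (a + b + ε * γ) * ε * x ≤ (C2 + ε * C3) * ε * (K * ε) := by
    have hγ' : γ ≤ C3 := le_of_abs_le hγ
    gcongr
  have hconst : ε ^ 2 * -C3 ≤ ε ^ 2 * δ := by
    gcongr
    exact neg_le_of_abs_le hδ
  rw [denError, den]
  linarith

theorem mem_Ioo_of_error_lt (hε : 0 < ε) (hC1 : C1 ≤ a - b) (hC2 : a + |b| ≤ C2)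
    (hα : |α| ≤ C3) (hβ : |β| ≤ C3) (hγ : |γ| ≤ C3) (hδ : |δ| ≤ C3)
    (hx : 0 ≤ x) (hxK : x ≤ K * ε) (hnum : numError C3 K ε < C1)
    (hden : denError C2 C3 K ε < 1)
    (hL : K + C2 + numError C3 K ε < L * (1 - denError C2 C3 K ε)) :
    Qmob ε a b α β γ δ x ∈ Ioo 0 (L * ε) := by
  have hsub : a - b ≤ C2 := by linarith [neg_le_abs b]
  have hadd : a + b ≤ C2 := by linarith [le_abs_self b]
  have herr := abs_num_sub_le (a := a) (b := b) hα hβ hx hxK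
  have herr_nonneg : 0 ≤ numError C3 K ε :=
    nonneg_of_mul_nonneg_left ((abs_nonneg _).trans herr) hε
  have hK_nonneg : 0 ≤ K := nonneg_of_mul_nonneg_left (hx.trans hxK) hε
  have hC2_nonneg : 0 ≤ C2 := by linarith
  have hden_le := one_sub_denError_le_den hε.le hC2_nonneg hadd hγ hδ hx hxK
  have hden_pos : 0 < den ε a b γ δ x := by linarith
  have hL_nonneg : 0 ≤ L := nonneg_of_mul_nonneg_left (by linarith) (sub_pos.2 hden)
  obtain ⟨hnum_ge, hnum_le⟩ := abs_le.1 herr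
  rw [eq_num_div_den]
  constructor
  · refine div_pos ?_ hden_pos
    calc 0 < (C1 - numError C3 K ε) * ε := mul_pos (sub_pos.2 hnum) hε
      _ ≤ x + ((a - b) - numError C3 K ε) * ε := le_add_of_nonneg_of_le hx (by gcongr)
      _ ≤ num ε a b α β x := by linarith
  · rw [div_lt_iff₀ hden_pos]
    calc num ε a b α β x ≤ x + (a - b) * ε + numError C3 K ε * ε := by linarith
      _ ≤ K * ε + C2 * ε + numError C3 K ε * ε := by gcongr
      _ = (K + C2 + numError C3 K ε) * ε := by ring
      _ < L * (1 - denError C2 C3 K ε) * ε := by gcongr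
      _ ≤ L * den ε a b γ δ x * ε := by gcongr
      _ = L * ε * den ε a b γ δ x := by ring

theorem tendsto_numError (C3 K : ℝ) : Tendsto (numError C3 K) (𝓝 0) (𝓝 0) := by
  have hcont : Continuous (numError C3 K) := by unfold numError; fun_prop
  simpa [numError] using hcont.tendsto 0

theorem tendsto_denError (C2 C3 K : ℝ) : Tendsto (denError C2 C3 K) (𝓝 0) (𝓝 0) := by
  have hcont : Continuous (denError C2 C3 K) := by unfold denError; fun_prop
  simpa [denError] using hcont.tendsto 0

theorem eventually_forall_mem_Ioo (C3 : ℝ) (hC1 : 0 < C1) (hL : K + C2 < L) :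
    ∀ᶠ ε in 𝓝[>] (0 : ℝ), ∀ a b α β γ δ : ℝ,
      C1 ≤ a - b → a + |b| ≤ C2 →
      |α| ≤ C3 → |β| ≤ C3 → |γ| ≤ C3 → |δ| ≤ C3 →
      ∀ x : ℝ, 0 ≤ x → x ≤ K * ε → Qmob ε a b α β γ δ x ∈ Ioo 0 (L * ε) := by
  have hnum := (tendsto_numError C3 K).eventually_lt_const hC1
  have hden := (tendsto_denError C2 C3 K).eventually_lt_const one_pos
  have hquot : ∀ᶠ ε in 𝓝 (0 : ℝ),
      K + C2 + numError C3 K ε < L * (1 - denError C2 C3 K ε) :=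
    ((tendsto_numError C3 K).const_add (K + C2)).eventually_lt
      (((tendsto_denError C2 C3 K).const_sub 1).const_mul L) (by simpa using hL)
  filter_upwards [self_mem_nhdsWithin, nhdsWithin_le_nhds hnum, nhdsWithin_le_nhds hden,
    nhdsWithin_le_nhds hquot] with ε hε hnum hden hquot
  intro a b α β γ δ hC1 hC2 hα hβ hγ hδ x hx hxK
  exact mem_Ioo_of_error_lt hε hC1 hC2 hα hβ hγ hδ hx hxK hnum hden hquot

end Qmob

theorem exists_mem_Ioo_forall_Ioc_of_eventually_nhdsGT {R : Type*} [LinearOrder R]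
    [TopologicalSpace R] [OrderTopology R] [DenselyOrdered R] [NoMaxOrder R] {p : R → Prop}
    {l u : R} (hlu : l < u) (h : ∀ᶠ t in 𝓝[>] l, p t) :
    ∃ t₀ ∈ Ioo l u, ∀ t ∈ Ioc l t₀, p t := by
  obtain ⟨t₀, ht₀, hsub⟩ := mem_nhdsGT_iff_exists_Ioc_subset.1 (h.and (Ioo_mem_nhdsGT hlu))
  exact ⟨t₀, (hsub (right_mem_Ioc.2 ht₀)).2, fun t ht => (hsub ht).1⟩

theorem lt_two_mul_mul_inv_one_sub_inv {C k : ℝ} (hC : 0 < C) (hk : 1 < k) :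
    C < 2 * C * (1 - k⁻¹)⁻¹ := by
  have hk_pos : 0 < k⁻¹ := inv_pos.2 (one_pos.trans hk)
  have hk_lt : k⁻¹ < 1 := inv_lt_one_of_one_lt₀ hk
  rw [← div_eq_mul_inv, lt_div_iff₀ (sub_pos.2 hk_lt)]
  linarith [mul_pos hC hk_pos]

theorem no_large_forward_jump_from_region_II_general {K C1 C2 r : ℝ} (C3 : ℝ)
    (hC1 : 0 < C1) (hr : K + C2 < r * K) :
    ∃ ε₀ ∈ Ioo (0 : ℝ) 1, ∀ ε ∈ Ioc (0 : ℝ) ε₀, ∀ a b α β γ δ : ℝ,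
      C1 ≤ a - b → a + |b| ≤ C2 →
      |α| ≤ C3 → |β| ≤ C3 → |γ| ≤ C3 → |δ| ≤ C3 →
      ∀ x : ℝ, 0 ≤ x → x ≤ K * ε →
        (0 < Qmob ε a b α β γ δ x ∧ Qmob ε a b α β γ δ x < r * K * ε) ∧
        ∀ C4 κ : ℝ, 0 < κ → κ ≤ C4 →
          κ ^ 2 * Qmob ε a b α β γ δ x < r * C4 ^ 2 * K * ε ∧
          (K * ε ≤ κ ^ 2 * Qmob ε a b α β γ δ x →
            κ ^ 2 * Qmob ε a b α β γ δ x ∈ Ico (K * ε) (r * C4 ^ 2 * K * ε)) := by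
  obtain ⟨ε₀, hε₀, hQ⟩ := exists_mem_Ioo_forall_Ioc_of_eventually_nhdsGT one_pos
    (Qmob.eventually_forall_mem_Ioo C3 hC1 hr)
  refine ⟨ε₀, hε₀, fun ε hε a b α β γ δ hab hab' hα hβ hγ hδ x hx hxK => ?_⟩
  obtain ⟨hpos, hlt⟩ := hQ ε hε a b α β γ δ hab hab' hα hβ hγ hδ x hx hxK
  refine ⟨⟨hpos, hlt⟩, fun C4 κ hκ hκC4 => ?_⟩
  have : 0 < C4 := hκ.trans_le hκC4
  have hdilated : κ ^ 2 * Qmob ε a b α β γ δ x < r * C4 ^ 2 * K * ε :=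
    calc κ ^ 2 * Qmob ε a b α β γ δ x ≤ C4 ^ 2 * Qmob ε a b α β γ δ x := by gcongr
      _ < C4 ^ 2 * (r * K * ε) := by gcongr
      _ = r * C4 ^ 2 * K * ε := by ring
  exact ⟨hdilated, fun hge => ⟨hge, hdilated⟩⟩

/-- There is `ε₀ ∈ (0,1)` depending only on `k, C1, C2, C3` such that for all
`ε ∈ (0,ε₀]`, all admissible parameters and all `x` with `0 < x < Kε`, one has
`0 < Q_ε·x < 2Kε`; consequently, if `0 < κ ≤ C4` then `κ²·(Q_ε·x) < 2C4²Kε`, and if moreover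
`κ²·(Q_ε·x) ≥ Kε` then `κ²·(Q_ε·x) ∈ [Kε, 2C4²Kε)`. Here `K = 2C2(1−k⁻¹)⁻¹`. -/
theorem no_large_forward_jump_from_region_II (k C1 C2 C3 C4 : ℝ)
    (hk : 1 < k) (hC1 : 0 < C1) (hC12 : C1 ≤ C2) (hC4 : 0 < C4) :
    ∃ ε₀ : ℝ, ε₀ ∈ Set.Ioo (0 : ℝ) 1 ∧
      ∀ ε ∈ Set.Ioc (0 : ℝ) ε₀, ∀ a b α β γ δ : ℝ,
        C1 ≤ a - |b| → a + |b| ≤ C2 →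
        |α| ≤ C3 → |β| ≤ C3 → |γ| ≤ C3 → |δ| ≤ C3 →
        ∀ x : ℝ, 0 < x → x < 2 * C2 * (1 - k⁻¹)⁻¹ * ε →
          (0 < Qmob ε a b α β γ δ x ∧
            Qmob ε a b α β γ δ x < 2 * (2 * C2 * (1 - k⁻¹)⁻¹) * ε) ∧
          ∀ κ : ℝ, 0 < κ → κ ≤ C4 →
            κ ^ 2 * Qmob ε a b α β γ δ x < 2 * C4 ^ 2 * (2 * C2 * (1 - k⁻¹)⁻¹) * ε ∧
            (2 * C2 * (1 - k⁻¹)⁻¹ * ε ≤ κ ^ 2 * Qmob ε a b α β γ δ x →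
              κ ^ 2 * Qmob ε a b α β γ δ x ∈
                Set.Ico (2 * C2 * (1 - k⁻¹)⁻¹ * ε)
                  (2 * C4 ^ 2 * (2 * C2 * (1 - k⁻¹)⁻¹) * ε)) := by
  have hK := lt_two_mul_mul_inv_one_sub_inv (hC1.trans_le hC12) hk
  obtain ⟨ε₀, hε₀, h⟩ := no_large_forward_jump_from_region_II_general C3 hC1
    ((add_lt_add_right hK _).trans_eq (two_mul _).symm)
  exact ⟨ε₀, hε₀, fun ε hε a b α β γ δ hab hab' hα hβ hγ hδ x hx hxK =>
    (h ε hε a b α β γ δ (by linarith [le_abs_self b]) hab' hα hβ hγ hδ x hx.le hxK.le).imp_right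
      fun hκ => hκ C4⟩
end
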